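/- Let P be a finite pure weighted graded poset of rank d possessing Property UL with constants (c^xyz_j, c^dia_j, c^sqr_j), with c^dia_j > 0 for all j, and let α_0,…,α_{d−1} be real numbers. Then for every 0 ≤ k ≤ d−1 and every f ∈ C^k with ⟨f,1⟩ = 0, there exist g_j, h_j ∈ C^j with ⟨g_j,1⟩ = ⟨h_j,1⟩ = 0 for 0 ≤ j ≤ k, such that: (1) f = g_k; (2) for all j ≤ k, ‖g_j‖² = Σ_{i=0}^j ‖h_i‖²; (3) for all j ≤ k, ‖U_j g_j‖² = Σ_{i=0}^j a_{j,i}·‖h_i‖² + Σ_{i=0}^j b_{j,i}·Σ_{x∈P(i−1)} m(x)·⟨(g_i)_x, (M^+_{x,0} − α_i·Id)(Id − M^−_{x,0})(g_i)_x⟩_x, where a_{l,r} = 1 − Π_{j=r}^{l} (1−α_j)/c^dia_j and b_{l,r} = (1/c^dia_r)·Π_{j=r+1}^{l} (1−α_j)/c^dia_j (empty products equal 1). -/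

import Mathlib

open Finset

attribute [local instance] Classical.propDecidable

noncomputable section

/-- A finite pure weighted graded poset of rank `d`, presented as a rank function
and a weight scheme on a finite partial order `P`. -/
structure WGP (P : Type) [Fintype P] [PartialOrder P] where
  /-- the rank of the poset -/
  d : ℤ
  /-- the rank function -/
  rk : P → ℤ
  rk_mono : Monotone rk
  rk_lb : ∀ x, -1 ≤ rk x
  rk_ub : ∀ x, rk x ≤ d
  rk_covBy : ∀ a b : P, a ⋖ b → rk b = rk a + 1
  bot_unique : ∃! x : P, rk x = -1
  isPure : ∀ x : P, ∃ y : P, rk y = d ∧ x ≤ y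
  /-- the weight function -/
  m : P → ℝ
  m_pos : ∀ x, 0 < m x
  /-- the transition probabilities: `p y x` is `p_{y → x}` -/
  p : P → P → ℝ
  p_nonneg : ∀ y x, 0 ≤ p y x
  p_pos_iff : ∀ y x, 0 < p y x ↔ x ⋖ y
  p_sum : ∀ y, 0 ≤ rk y → ∑ x ∈ univ.filter (fun x => x ⋖ y), p y x = 1
  m_eq : ∀ x, rk x < d → m x = ∑ y ∈ univ.filter (fun y => x ⋖ y), p y x * m y
  m_bot : ∀ x, rk x = -1 → m x = 1

/-- `T` has at most `n` eigenvalues greater than `c`, counted with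
(geometric) multiplicity. -/
def eigMultAboveLe {V : Type*} [AddCommGroup V] [Module ℝ V]
    (T : Module.End ℝ V) (c : ℝ) (n : ℕ) : Prop :=
  ∀ s : Finset ℝ, (∀ μ ∈ s, c < μ) →
    ∑ μ ∈ s, Module.finrank ℝ (T.eigenspace μ) ≤ n

/-- `μ` is the second largest eigenvalue of `T`, counted with multiplicity. -/
def IsSecondLargestEig {V : Type*} [AddCommGroup V] [Module ℝ V]
    (T : Module.End ℝ V) (μ : ℝ) : Prop :=
  T.HasEigenvalue μ ∧ eigMultAboveLe T μ 1 ∧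
    ∃ s : Finset ℝ, (∀ ν ∈ s, μ ≤ ν) ∧
      2 ≤ ∑ ν ∈ s, Module.finrank ℝ (T.eigenspace ν)

/-- `ν` is the least eigenvalue of `T`. -/
def IsLeastEig {V : Type*} [AddCommGroup V] [Module ℝ V]
    (T : Module.End ℝ V) (ν : ℝ) : Prop :=
  T.HasEigenvalue ν ∧ ∀ c : ℝ, T.HasEigenvalue c → ν ≤ c

/-- `λ(T) ≤ lam`, i.e. the second largest eigenvalue of `T` (with multiplicity)
is at most `lam` and the least eigenvalue is at least `-lam`. -/
def lamBd {V : Type*} [AddCommGroup V] [Module ℝ V]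
    (T : Module.End ℝ V) (lam : ℝ) : Prop :=
  eigMultAboveLe T lam 1 ∧ ∀ c : ℝ, T.HasEigenvalue c → -lam ≤ c

namespace WGP

variable {P : Type} [Fintype P] [PartialOrder P] (W : WGP P)

/-- The level set `P(i)`. -/
def lvl (i : ℤ) : Finset P := univ.filter (fun x => W.rk x = i)

/-- The weighted inner product on `C^i`. -/
def innerAt (i : ℤ) (f g : P → ℝ) : ℝ := ∑ x ∈ W.lvl i, W.m x * f x * g x

/-- The squared norm on `C^i`. -/
def normSqAt (i : ℤ) (f : P → ℝ) : ℝ := W.innerAt i f f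

/-- The norm on `C^i`. -/
def normAt (i : ℤ) (f : P → ℝ) : ℝ := Real.sqrt (W.normSqAt i f)

/-- The matrix of transition probabilities : entry `(y, x)` is `p_{y→x}`,
which vanishes unless `x ⋖ y`.  This is also the matrix of the up operator. -/
def upMat : Matrix P P ℝ := Matrix.of fun y x => W.p y x

/-- The matrix of the down operator. -/
def downMat : Matrix P P ℝ := Matrix.of fun x y => W.p y x * W.m y / W.m x

/-- The up operator `U`. -/
def Up (f : P → ℝ) : P → ℝ := W.upMat.mulVec f

/-- The down operator `D`. -/
def Down (f : P → ℝ) : P → ℝ := W.downMat.mulVec f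

/-- `chSum x y = Σ_{c ∈ Ch(y→x)} p(c)`, the total `p`-weight of maximal chains
from `x` up to `y` (the entry of the corresponding power of the transition
matrix). -/
def chSum (x y : P) : ℝ := (W.upMat ^ (W.rk y - W.rk x).toNat) y x

/-- The induced weight function of the link `P_x`. -/
def mL (x y : P) : ℝ := W.m y / W.m x * W.chSum x y

/-- The induced transition probabilities of the link `P_x` :
`pL x z y = (p_x)_{z → y}`. -/
def pL (x z y : P) : ℝ := W.p z y * W.chSum x y / W.chSum x z

/-- The level set `P_x(j)` of the link of `x`. -/
def linkLvl (x : P) (j : ℤ) : Finset P :=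
  univ.filter (fun y => x ≤ y ∧ W.rk y = W.rk x + 1 + j)

/-- The inner product of the link `P_x` at link-level `j`. -/
def innerL (x : P) (j : ℤ) (f g : P → ℝ) : ℝ :=
  ∑ y ∈ W.linkLvl x j, W.mL x y * f y * g y

/-- The matrix of the up operator of the link `P_x`. -/
def upMatL (x : P) : Matrix P P ℝ :=
  Matrix.of fun z y => if y ⋖ z ∧ x ≤ y then W.pL x z y else 0

/-- The matrix of the down operator of the link `P_x`. -/
def downMatL (x : P) : Matrix P P ℝ :=
  Matrix.of fun y z => if y ⋖ z then W.pL x z y * W.mL x z / W.mL x y else 0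

/-- The up operator of the link `P_x`. -/
def UpL (x : P) (f : P → ℝ) : P → ℝ := (W.upMatL x).mulVec f

/-- The down operator of the link `P_x`. -/
def DownL (x : P) (f : P → ℝ) : P → ℝ := (W.downMatL x).mulVec f

/-- The up-down walk `M^+_{x,0}` of the link `P_x`. -/
def MplusL (x : P) (f : P → ℝ) : P → ℝ := W.DownL x (W.UpL x f)

/-- The down-up walk `M^-_{x,0}` of the link `P_x`. -/
def MminusL (x : P) (f : P → ℝ) : P → ℝ := W.UpL x (W.DownL x f)

/-- The adjacency matrix. -/
def adjMat : Matrix P P ℝ := Matrix.of fun y x =>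
  if x = y then 0 else
    ∑ z ∈ univ.filter (fun z => x ⋖ z ∧ y ⋖ z),
      W.m z * W.p z x * W.p z y / ((1 - W.p z y) * W.m y)

/-- The adjacency operator. -/
def Adj (f : P → ℝ) : P → ℝ := W.adjMat.mulVec f

/-- The adjacency matrix of the link `P_x`. -/
def adjMatL (x : P) : Matrix P P ℝ := Matrix.of fun y w =>
  if w = y then 0 else
    ∑ z ∈ univ.filter (fun z => w ⋖ z ∧ y ⋖ z),
      W.mL x z * W.pL x z w * W.pL x z y / ((1 - W.pL x z y) * W.mL x y)

/-- The adjacency operator of the link `P_x`. -/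
def AdjL (x : P) (f : P → ℝ) : P → ℝ := (W.adjMatL x).mulVec f

/-- The up-down walk `M^+_l` as an endomorphism of `C^l`. -/
def MplusEnd (l : ℤ) : Module.End ℝ ({x : P // W.rk x = l} → ℝ) :=
  ((W.downMat * W.upMat).submatrix Subtype.val Subtype.val).mulVecLin

/-- The up-down walk `M^+_{x,0}` as an endomorphism of `C^0(P_x)`. -/
def MplusEndL (x : P) : Module.End ℝ ({y : P // x ⋖ y} → ℝ) :=
  ((W.downMatL x * W.upMatL x).submatrix Subtype.val Subtype.val).mulVecLin

/-- The adjacency operator `A_x` of the link `P_x` as an endomorphism of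
`C^0(P_x)`. -/
def AdjEndL (x : P) : Module.End ℝ ({y : P // x ⋖ y} → ℝ) :=
  ((W.adjMatL x).submatrix Subtype.val Subtype.val).mulVecLin

/-- A standard weight scheme. -/
def Standard : Prop :=
  ∀ y x : P, x ⋖ y → W.p y x = 1 / ((univ.filter (fun z => z ⋖ y)).card : ℝ)

/-- `P` is lower regular at level `i` with constant `N`. -/
def LowerRegAt (i : ℤ) (N : ℕ) : Prop :=
  ∀ y : P, W.rk y = i → (univ.filter (fun z => z ⋖ y)).card = N

/-- `P` is middle regular at level `i` with constant `N`. -/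
def MiddleRegAt (i : ℤ) (N : ℕ) : Prop :=
  ∀ x z : P, W.rk x = i + 1 → W.rk z = i - 1 → z < x →
    (univ.filter (fun y => z ⋖ y ∧ y ⋖ x)).card = N

/-- `P` is `∨∧`-regular at level `i` with constant `N`. -/
def WedgeRegAt (i : ℤ) (N : ℕ) : Prop :=
  ∀ y₁ y₂ : P, W.rk y₁ = i → W.rk y₂ = i → y₁ ≠ y₂ → (∃ z, y₁ ⋖ z ∧ y₂ ⋖ z) →
    (univ.filter (fun s => s ⋖ y₁ ∧ s ⋖ y₂)).card = N

/-- `P` is `⅄`-regular with constant `R`. -/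
def WyeReg (R : ℕ) : Prop :=
  ∀ u y₁ y₂ : P, W.rk u = 2 → W.rk y₁ = 0 → W.rk y₂ = 0 → y₁ ≠ y₂ →
    y₁ < u → y₂ < u →
    (univ.filter (fun z => y₁ ⋖ z ∧ y₂ ⋖ z ∧ z ⋖ u)).card = R

/-- Property UL.1 with constants `c`. -/
def UL1 (c : ℤ → ℝ) : Prop :=
  ∀ l : ℤ, 0 ≤ l → l < W.d → ∀ y : P, W.rk y = l → ∀ x : P, y ⋖ x →
    ∑ z ∈ univ.filter (fun z => z ⋖ y), W.p y z ^ 2 / W.chSum z x = c l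

/-- Property UL.2 with constants `c`. -/
def UL2 (c : ℤ → ℝ) : Prop :=
  ∀ l : ℤ, 0 ≤ l → l < W.d → ∀ y₁ y₂ : P, W.rk y₁ = l → W.rk y₂ = l → y₁ ≠ y₂ →
    ∀ x : P, y₁ ⋖ x → y₂ ⋖ x →
    ∑ z ∈ univ.filter (fun z => z ⋖ y₁ ∧ z ⋖ y₂),
      W.p y₁ z * W.p y₂ z / W.chSum z x = c l

/-- Property UL.3 with constants `c`. -/
def UL3 (c : ℤ → ℝ) : Prop :=
  ∀ l : ℤ, 0 ≤ l → l < W.d → ∀ y : P, W.rk y = l →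
    ∑ x ∈ univ.filter (fun x => y ⋖ x), W.m x * W.p x y ^ 2 = c l * W.m y

/-- Property AL. -/
def AL : Prop :=
  ∀ l : ℤ, 0 ≤ l → l ≤ W.d - 1 → ∀ x y : P, W.rk x = l → W.rk y = l → x ≠ y →
    ∑ z ∈ univ.filter (fun z => x ⋖ z ∧ y ⋖ z),
        W.m z * W.p z x * W.p z y / (1 - W.p z x)
    = ∑ z ∈ univ.filter (fun z => x ⋖ z ∧ y ⋖ z),
        W.m z * W.p z x * W.p z y *
          ∑ s ∈ univ.filter (fun s => s ⋖ x ∧ s ⋖ y),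
            W.p x s * W.p y s / (W.chSum s z - W.p z x * W.p x s)

/-- Equation TL.1 with constant `c`. -/
def TL1 (c : ℝ) : Prop :=
  ∀ y : P, W.rk y = 0 →
    c * W.m y = ∑ z ∈ univ.filter (fun z => y ⋖ z), W.m z * W.p z y ^ 2 *
      ∑ x ∈ univ.filter (fun x => x ⋖ z ∧ x ≠ y), W.p z x / (1 - W.p z x) ^ 2

/-- Equation TL.2 with constant `c`. -/
def TL2 (c : ℝ) : Prop :=
  ∀ y₁ y₂ : P, W.rk y₁ = 0 → W.rk y₂ = 0 → y₁ ≠ y₂ →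
    c * ∑ z ∈ univ.filter (fun z => y₁ ⋖ z ∧ y₂ ⋖ z),
          W.m z * W.p z y₁ * W.p z y₂ / (1 - W.p z y₁)
    = ∑ z ∈ univ.filter (fun z => y₁ ⋖ z ∧ y₂ ⋖ z),
        W.m z * W.p z y₁ * W.p z y₂ *
          ∑ x ∈ univ.filter (fun x => x ⋖ z ∧ x ≠ y₁ ∧ x ≠ y₂),
            W.p z x / (1 - W.p z x) ^ 2

/-- Equation TL.3 with constant `c`. -/
def TL3 (c : ℝ) : Prop :=
  ∀ y : P, W.rk y = 0 →
    c * W.m y =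
      ∑ x ∈ univ.filter (fun x => W.rk x = 0 ∧ x ≠ y),
        ∑ z ∈ univ.filter (fun z => x ⋖ z ∧ y ⋖ z),
          ∑ w ∈ univ.filter (fun w => w ≠ z ∧ x ⋖ w ∧ y ⋖ w),
            ∑ u ∈ univ.filter (fun u => z ⋖ u ∧ w ⋖ u),
              W.m u * W.p u z * W.p u w * W.p w y * W.p z y * W.p w x * W.p z x /
                (W.chSum x u * (1 - W.p u z * W.p z x / W.chSum x u) *
                  (1 - W.p w x) * (1 - W.p z x))

/-- Equation TL.4 with constant `c`. -/
def TL4 (c : ℝ) : Prop :=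
  ∀ y₁ y₂ : P, W.rk y₁ = 0 → W.rk y₂ = 0 → y₁ ≠ y₂ →
    c * ∑ z ∈ univ.filter (fun z => y₁ ⋖ z ∧ y₂ ⋖ z),
          W.m z * W.p z y₁ * W.p z y₂ / (1 - W.p z y₁)
    = ∑ x ∈ univ.filter (fun x => W.rk x = 0 ∧ x ≠ y₁ ∧ x ≠ y₂),
        ∑ z ∈ univ.filter (fun z => x ⋖ z ∧ y₂ ⋖ z),
          ∑ w ∈ univ.filter (fun w => w ≠ z ∧ x ⋖ w ∧ y₁ ⋖ w),
            ∑ u ∈ univ.filter (fun u => z ⋖ u ∧ w ⋖ u),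
              W.m u * W.p u z * W.p u w * W.p w y₁ * W.p z y₂ * W.p w x * W.p z x /
                (W.chSum x u * (1 - W.p u z * W.p z x / W.chSum x u) *
                  (1 - W.p w x) * (1 - W.p z x))

/-- The induced function `f̂_x ∈ C^0(P_x)` of `f ∈ C^0`. -/
def hatF (x : P) (f : P → ℝ) : P → ℝ := fun z =>
  (1 / (1 - W.p z x)) * ∑ y ∈ univ.filter (fun y => y ≠ x ∧ y ⋖ z), W.p z y * f y

/-- `P` is connected: the Markov chain `M^+_0` on `P(0)` is irreducible. -/
def Connected : Prop :=
  ∀ y z : P, W.rk y = 0 → W.rk z = 0 →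
    ∃ j : ℕ, 0 < j ∧ ((W.downMat * W.upMat) ^ j) z y ≠ 0

/-- The link `P_x` is connected: the Markov chain `M^+_{x,0}` on `P_x(0)` is
irreducible. -/
def LinkConnected (x : P) : Prop :=
  ∀ y z : P, x ⋖ y → x ⋖ z →
    ∃ j : ℕ, 0 < j ∧ ((W.downMatL x * W.upMatL x) ^ j) z y ≠ 0

/-- `c` is a nontrivial eigenvalue of the adjacency operator `A` of `P`,
i.e. one with an eigenvector orthogonal to the constants. -/
def IsNontrivEigAdj (c : ℝ) : Prop :=
  ∃ f : P → ℝ, (∃ y, W.rk y = 0 ∧ f y ≠ 0) ∧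
    (∀ y, W.rk y = 0 → W.Adj f y = c * f y) ∧
    W.innerAt 0 f (fun _ => 1) = 0

/-- `c` is a nontrivial eigenvalue of the adjacency operator `A_x` of the
link `P_x`. -/
def IsNontrivEigAdjL (x : P) (c : ℝ) : Prop :=
  ∃ f : P → ℝ, (∃ y, x ⋖ y ∧ f y ≠ 0) ∧
    (∀ y, x ⋖ y → W.AdjL x f y = c * f y) ∧
    W.innerL x 0 f (fun _ => 1) = 0

end WGP

/-!
Write `c`, `a` for `cdia i`, `α i`. Localizing the up operator to the links and using UL.1 and UL.2
to sum the squares of the two-step averages over the bottom vertices gives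
`∑ₓ m(x) ⟨gₓ, M⁺ₓ gₓ⟩ₓ = c ‖U g‖² + (cxyz i - c) csqr i ‖g‖²` for `g ∈ C^i`; evaluating at `g = 1`
shows `(cxyz i - c) csqr i = 1 - c`. Since `M⁻ₓ gₓ` is the constant `(D g)(x)` on the link,
`‖g‖² - ‖U g‖² = (1 - a) / c * (‖g‖² - ‖D g‖²) - 1 / c * ∑ₓ m(x) ⟨gₓ, (M⁺ₓ - a)(1 - M⁻ₓ) gₓ⟩ₓ`.

By Cauchy–Schwarz, some multiple `g'` of `D g` satisfies `‖U g'‖ = ‖D g‖` and `‖g'‖ ≤ ‖g‖`.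
Iterating `g ↦ g'` from `g_k = f` downwards, and taking for `h_j` the multiple of `g_j` with
`‖h_j‖² = ‖g_j‖² - ‖g_{j-1}‖²`, the identity becomes a linear recurrence for `‖g_j‖² - ‖U g_j‖²`,
whose solution is the claim.
-/

@[to_additive]
lemma prod_Icc_int_succ {M : Type*} [CommMonoid M] {a b : ℤ} (h : a ≤ b + 1) (f : ℤ → M) :
    ∏ i ∈ Icc a (b + 1), f i = (∏ i ∈ Icc a b, f i) * f (b + 1) := by
  rw [← insert_Icc_right_eq_Icc_add_one h, prod_insert (by simp), mul_comm]

lemma sum_Icc_int_sub_sub_one {M : Type*} [AddCommGroup M] (f : ℤ → M) {j : ℤ} (hj : -1 ≤ j) :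
    ∑ i ∈ Icc 0 j, (f i - f (i - 1)) = f j - f (-1) := by
  induction j, hj using Int.leInduction with
  | base => simp
  | succ j hj ih =>
    rw [sum_Icc_int_succ (by lia), ih, add_sub_cancel_right]
    abel

lemma eq_sum_prod_mul_sub_of_recurrence {R : Type*} [CommRing R] {e r s t : ℤ → R} {k : ℤ}
    (h_init : e (-1) = 0)
    (h_step : ∀ j, -1 ≤ j → j < k → e (j + 1) = r (j + 1) * (e j + s (j + 1)) - t (j + 1))
    {j : ℤ} (hj : -1 ≤ j) (hjk : j ≤ k) :
    e j = ∑ i ∈ Icc 0 j, (∏ l ∈ Icc i j, r l) * s i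
      - ∑ i ∈ Icc 0 j, (∏ l ∈ Icc (i + 1) j, r l) * t i := by
  induction j, hj using Int.leInduction with
  | base => simp [h_init]
  | succ j hj ih =>
    have hs : ∑ i ∈ Icc 0 j, (∏ l ∈ Icc i (j + 1), r l) * s i
        = r (j + 1) * ∑ i ∈ Icc 0 j, (∏ l ∈ Icc i j, r l) * s i := by
      rw [mul_sum]
      refine sum_congr rfl fun i hi => ?_
      rw [prod_Icc_int_succ (by have := mem_Icc.1 hi; lia)]
      ring
    have ht : ∑ i ∈ Icc 0 j, (∏ l ∈ Icc (i + 1) (j + 1), r l) * t i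
        = r (j + 1) * ∑ i ∈ Icc 0 j, (∏ l ∈ Icc (i + 1) j, r l) * t i := by
      rw [mul_sum]
      refine sum_congr rfl fun i hi => ?_
      rw [prod_Icc_int_succ (by have := mem_Icc.1 hi; lia)]
      ring
    rw [h_step j hj (by lia), ih (by lia), sum_Icc_int_succ (by lia),
      sum_Icc_int_succ (by lia), hs, ht, Icc_self, prod_singleton,
      Icc_eq_empty (a := j + 1 + 1) (by lia), prod_empty]
    ring

namespace WGP

variable {P : Type} [Fintype P] [PartialOrder P] (W : WGP P)

/-! ### Ranks, transition probabilities and levels -/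

lemma covBy_of_p_ne_zero {x y : P} (h : W.p y x ≠ 0) : x ⋖ y :=
  (W.p_pos_iff y x).1 ((W.p_nonneg y x).lt_of_ne' h)

lemma p_eq_zero_of_not_covBy {x y : P} (h : ¬x ⋖ y) : W.p y x = 0 :=
  of_not_not fun h' => h (W.covBy_of_p_ne_zero h')

lemma p_ne_zero {x y : P} (h : x ⋖ y) : W.p y x ≠ 0 :=
  ((W.p_pos_iff y x).2 h).ne'

lemma p_eq_zero_of_rk_ne {x y : P} (h : W.rk y ≠ W.rk x + 1) : W.p y x = 0 :=
  W.p_eq_zero_of_not_covBy fun h' => h (W.rk_covBy x y h')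

lemma sum_p_eq_one {y : P} (hy : 0 ≤ W.rk y) : ∑ x, W.p y x = 1 := by
  rw [← W.p_sum y hy]
  exact (sum_filter_of_ne fun x _ => W.covBy_of_p_ne_zero).symm

lemma sum_m_mul_p {x : P} (hx : W.rk x < W.d) : ∑ y, W.m y * W.p y x = W.m x := by
  rw [W.m_eq x hx, sum_filter_of_ne fun y _ h => W.covBy_of_p_ne_zero (left_ne_zero_of_mul h)]
  exact sum_congr rfl fun y _ => mul_comm _ _

lemma rk_strictMono : StrictMono W.rk := fun a b hab => by
  obtain ⟨c, hac, hcb⟩ := exists_covBy_le_of_lt hab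
  have := W.rk_covBy a c hac
  have := W.rk_mono hcb
  lia

lemma covBy_iff_le_and_rk_eq {x y : P} : x ⋖ y ↔ x ≤ y ∧ W.rk y = W.rk x + 1 := by
  refine ⟨fun h => ⟨h.le, W.rk_covBy x y h⟩, fun ⟨hle, hrk⟩ => ⟨hle.lt_of_ne ?_, ?_⟩⟩
  · rintro rfl
    lia
  · intro c hxc hcy
    have := W.rk_strictMono hxc
    have := W.rk_strictMono hcy
    lia

lemma mem_lvl {i : ℤ} {x : P} : x ∈ W.lvl i ↔ W.rk x = i := by
  simp [lvl]

lemma sum_lvl_comm {i j n : ℤ} (hij : i + n = j) {F : P → P → ℝ}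
    (hF : ∀ x y, W.rk y ≠ W.rk x + n → F x y = 0) :
    ∑ x ∈ W.lvl i, ∑ y, F x y = ∑ y ∈ W.lvl j, ∑ x, F x y := by
  calc ∑ x ∈ W.lvl i, ∑ y, F x y = ∑ x ∈ W.lvl i, ∑ y ∈ W.lvl j, F x y := by
        refine sum_congr rfl fun x hx => (sum_subset (subset_univ _) fun y _ hy => hF x y ?_).symm
        rw [mem_lvl] at hx hy
        lia
    _ = ∑ y ∈ W.lvl j, ∑ x ∈ W.lvl i, F x y := sum_comm
    _ = ∑ y ∈ W.lvl j, ∑ x, F x y := by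
        refine sum_congr rfl fun y hy => sum_subset (subset_univ _) fun x _ hx => hF x y ?_
        rw [mem_lvl] at hx hy
        lia

lemma exists_lvl_neg_one_eq_singleton : ∃ b, W.lvl (-1) = {b} := by
  obtain ⟨b, hb, hunique⟩ := W.bot_unique
  refine ⟨b, ext fun x => ?_⟩
  rw [mem_lvl, mem_singleton]
  exact ⟨hunique x, fun h => h ▸ hb⟩

lemma chSum_self (x : P) : W.chSum x x = 1 := by
  simp [chSum]

lemma chSum_of_covBy {x y : P} (h : x ⋖ y) : W.chSum x y = W.p y x := by
  have : (W.rk y - W.rk x).toNat = 1 := by have := W.rk_covBy x y h; lia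
  simp [chSum, this, upMat]

lemma chSum_of_rk_eq_add_two {x z : P} (h : W.rk z = W.rk x + 2) :
    W.chSum x z = ∑ y, W.p z y * W.p y x := by
  have : (W.rk z - W.rk x).toNat = 2 := by lia
  simp [chSum, this, upMat, pow_two, Matrix.mul_apply]

lemma chSum_ne_zero_of_covBy_of_covBy {x y z : P} (hxy : x ⋖ y) (hyz : y ⋖ z) :
    W.chSum x z ≠ 0 := by
  have := W.rk_covBy x y hxy
  have := W.rk_covBy y z hyz
  rw [W.chSum_of_rk_eq_add_two (by lia)]
  refine ne_of_gt <| sum_pos' (fun w _ => mul_nonneg (W.p_nonneg z w) (W.p_nonneg w x))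
    ⟨y, mem_univ y, ?_⟩
  exact mul_pos ((W.p_pos_iff z y).2 hyz) ((W.p_pos_iff y x).2 hxy)

/-! ### Inner products and walk operators -/

lemma innerAt_congr {i : ℤ} {f f' g g' : P → ℝ} (hf : ∀ x, W.rk x = i → f x = f' x)
    (hg : ∀ x, W.rk x = i → g x = g' x) : W.innerAt i f g = W.innerAt i f' g' :=
  sum_congr rfl fun x hx => by rw [hf x (W.mem_lvl.1 hx), hg x (W.mem_lvl.1 hx)]

lemma innerAt_smul_left (i : ℤ) (c : ℝ) (f g : P → ℝ) :
    W.innerAt i (c • f) g = c * W.innerAt i f g := by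
  simp only [innerAt, mul_sum, Pi.smul_apply, smul_eq_mul]
  exact sum_congr rfl fun x _ => by ring

lemma normSqAt_eq_sum (i : ℤ) (g : P → ℝ) :
    W.normSqAt i g = ∑ x ∈ W.lvl i, W.m x * g x ^ 2 :=
  sum_congr rfl fun x _ => by ring

lemma normSqAt_smul (i : ℤ) (c : ℝ) (g : P → ℝ) :
    W.normSqAt i (c • g) = c ^ 2 * W.normSqAt i g := by
  simp only [normSqAt_eq_sum, mul_sum, Pi.smul_apply, smul_eq_mul]
  exact sum_congr rfl fun x _ => by ring

lemma normSqAt_nonneg (i : ℤ) (g : P → ℝ) : 0 ≤ W.normSqAt i g := by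
  rw [normSqAt_eq_sum]
  exact sum_nonneg fun x _ => mul_nonneg (W.m_pos x).le (sq_nonneg _)

lemma innerAt_sq_le (i : ℤ) (f g : P → ℝ) :
    W.innerAt i f g ^ 2 ≤ W.normSqAt i f * W.normSqAt i g := by
  rw [normSqAt_eq_sum, normSqAt_eq_sum]
  exact sum_sq_le_sum_mul_sum_of_sq_le_mul _
    (fun x _ => mul_nonneg (W.m_pos x).le (sq_nonneg _))
    (fun x _ => mul_nonneg (W.m_pos x).le (sq_nonneg _)) fun x _ => le_of_eq (by ring)

lemma normSqAt_neg_one_eq_zero {g : P → ℝ} (hg : W.innerAt (-1) g (fun _ => 1) = 0) :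
    W.normSqAt (-1) g = 0 := by
  obtain ⟨b, hb⟩ := W.exists_lvl_neg_one_eq_singleton
  simp only [normSqAt, innerAt, hb, sum_singleton, mul_one] at hg ⊢
  rw [hg, zero_mul]

lemma Up_apply (f : P → ℝ) (y : P) : W.Up f y = ∑ x, W.p y x * f x := rfl

lemma m_mul_Down (f : P → ℝ) (x : P) : W.m x * W.Down f x = ∑ y, W.m y * W.p y x * f y := by
  change W.m x * ∑ y, W.p y x * W.m y / W.m x * f y = _
  rw [mul_sum]
  refine sum_congr rfl fun y _ => ?_
  have := (W.m_pos x).ne'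
  field_simp

lemma innerAt_Down (i : ℤ) (f g : P → ℝ) :
    W.innerAt i (W.Down f) g = W.innerAt (i + 1) f (W.Up g) := by
  calc W.innerAt i (W.Down f) g
      = ∑ x ∈ W.lvl i, ∑ y, W.m y * W.p y x * f y * g x :=
        sum_congr rfl fun x _ => by rw [m_mul_Down, sum_mul]
    _ = ∑ y ∈ W.lvl (i + 1), ∑ x, W.m y * W.p y x * f y * g x :=
        W.sum_lvl_comm rfl fun x y h => by rw [W.p_eq_zero_of_rk_ne h]; ring
    _ = W.innerAt (i + 1) f (W.Up g) := by
        refine sum_congr rfl fun y _ => ?_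
        rw [Up_apply, mul_sum]
        exact sum_congr rfl fun x _ => by ring

lemma Up_one {y : P} (hy : 0 ≤ W.rk y) : W.Up (fun _ => 1) y = 1 := by
  simp [Up_apply, W.sum_p_eq_one hy]

lemma Down_one {x : P} (hx : W.rk x < W.d) : W.Down (fun _ => 1) x = 1 := by
  have h : W.m x * W.Down (fun _ => 1) x = W.m x := by
    simp only [m_mul_Down, mul_one, W.sum_m_mul_p hx]
  exact mul_left_cancel₀ (W.m_pos x).ne' (h.trans (mul_one _).symm)

lemma innerAt_Down_one {i : ℤ} (hi : -1 ≤ i) (f : P → ℝ) :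
    W.innerAt i (W.Down f) (fun _ => 1) = W.innerAt (i + 1) f (fun _ => 1) := by
  rw [innerAt_Down]
  exact W.innerAt_congr (fun _ _ => rfl) fun x hx => W.Up_one (by lia)

lemma normSqAt_one {i : ℤ} (hi : -1 ≤ i) (hid : i ≤ W.d) : W.normSqAt i (fun _ => 1) = 1 := by
  induction i, hi using Int.leInduction with
  | base =>
    obtain ⟨b, hb⟩ := W.exists_lvl_neg_one_eq_singleton
    have hrk : W.rk b = -1 := W.mem_lvl.1 (hb ▸ mem_singleton_self b)
    simp [normSqAt_eq_sum, hb, W.m_bot b hrk]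
  | succ i hi ih =>
    have hstep : W.normSqAt i (fun _ => 1) = W.normSqAt (i + 1) (fun _ => 1) := by
      rw [normSqAt, normSqAt, ← W.innerAt_Down_one hi]
      exact W.innerAt_congr (fun x hx => (W.Down_one (by lia)).symm) fun _ _ => rfl
    exact hstep.symm.trans (ih (by lia))

/-! ### Links -/

lemma mem_linkLvl_zero {x y : P} : y ∈ W.linkLvl x 0 ↔ x ⋖ y := by
  simp [linkLvl, W.covBy_iff_le_and_rk_eq]

lemma innerL_congr {x : P} {f f' g g' : P → ℝ} (hf : ∀ y, x ⋖ y → f y = f' y)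
    (hg : ∀ y, x ⋖ y → g y = g' y) : W.innerL x 0 f g = W.innerL x 0 f' g' :=
  sum_congr rfl fun y hy => by
    rw [hf y (W.mem_linkLvl_zero.1 hy), hg y (W.mem_linkLvl_zero.1 hy)]

lemma m_mul_innerL (x : P) (f g : P → ℝ) :
    W.m x * W.innerL x 0 f g = ∑ y, W.m y * W.p y x * f y * g y := by
  have hsupp : ∀ y ∈ univ, y ∉ W.linkLvl x 0 → W.m y * W.p y x * f y * g y = 0 := by
    intro y _ hy
    rw [W.p_eq_zero_of_not_covBy (mt W.mem_linkLvl_zero.2 hy)]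
    ring
  rw [innerL, mul_sum, ← sum_subset (subset_univ _) hsupp]
  refine sum_congr rfl fun y hy => ?_
  have := (W.m_pos x).ne'
  rw [mL, W.chSum_of_covBy (W.mem_linkLvl_zero.1 hy)]
  field_simp

lemma innerL_one_right (x : P) (g : P → ℝ) : W.innerL x 0 g (fun _ => 1) = W.Down g x := by
  refine mul_left_cancel₀ (W.m_pos x).ne' ?_
  simp only [m_mul_innerL, m_mul_Down, mul_one]

lemma sum_m_mul_innerL_self {i : ℤ} (hi : 0 ≤ i) (g : P → ℝ) :
    ∑ x ∈ W.lvl (i - 1), W.m x * W.innerL x 0 g g = W.normSqAt i g := by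
  calc ∑ x ∈ W.lvl (i - 1), W.m x * W.innerL x 0 g g
      = ∑ x ∈ W.lvl (i - 1), ∑ y, W.m y * W.p y x * g y * g y :=
        sum_congr rfl fun x _ => W.m_mul_innerL x g g
    _ = ∑ y ∈ W.lvl i, ∑ x, W.m y * W.p y x * g y * g y :=
        W.sum_lvl_comm (sub_add_cancel i 1) fun x y h => by rw [W.p_eq_zero_of_rk_ne h]; ring
    _ = W.normSqAt i g := by
        refine sum_congr rfl fun y hy => ?_
        rw [← sum_mul, ← sum_mul, ← mul_sum, W.sum_p_eq_one (by rw [W.mem_lvl.1 hy]; exact hi),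
          mul_one]

lemma UpL_apply_of_covBy {x y : P} (h : x ⋖ y) (φ : P → ℝ) : W.UpL x φ y = φ x := by
  change ∑ w, W.upMatL x y w * φ w = φ x
  rw [sum_eq_single x]
  · rw [upMatL, Matrix.of_apply, if_pos ⟨h, le_rfl⟩, pL, chSum_self, W.chSum_of_covBy h, mul_one,
      div_self (W.p_ne_zero h), one_mul]
  · intro w _ hw
    rw [upMatL, Matrix.of_apply, if_neg, zero_mul]
    exact fun ⟨hwy, hxw⟩ => h.2 (hxw.lt_of_ne' hw) hwy.lt
  · simp

lemma DownL_apply_self (x : P) (g : P → ℝ) : W.DownL x g x = W.Down g x := by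
  change ∑ y, W.downMatL x x y * g y = ∑ y, W.downMat x y * g y
  refine sum_congr rfl fun y _ => congrArg (· * g y) ?_
  rw [downMatL, downMat, Matrix.of_apply, Matrix.of_apply]
  split_ifs with h
  · have := W.p_ne_zero h
    rw [pL, mL, mL, chSum_self, W.chSum_of_covBy h]
    have := (W.m_pos x).ne'
    field_simp
  · simp [W.p_eq_zero_of_not_covBy h]

lemma MminusL_apply {x y : P} (h : x ⋖ y) (g : P → ℝ) : W.MminusL x g y = W.Down g x := by
  rw [MminusL, W.UpL_apply_of_covBy h, DownL_apply_self]

/-- The sum of `φ` over the intermediate elements of the chains from `x` up to `z` of length two,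
weighted by the chain probabilities. It is the link up operator `U_{x,0}` before normalization,
and vanishes at `z` unless `rk z = rk x + 2`. -/
def twoStepSum (x : P) (φ : P → ℝ) (z : P) : ℝ := ∑ y, W.p z y * W.p y x * φ y

lemma twoStepSum_eq_zero_of_rk_ne {x z : P} (h : W.rk z ≠ W.rk x + 2) (φ : P → ℝ) :
    W.twoStepSum x φ z = 0 := by
  refine sum_eq_zero fun y _ => ?_
  by_cases hy : x ⋖ y
  · have := W.rk_covBy x y hy
    rw [W.p_eq_zero_of_rk_ne (x := y) (by lia), zero_mul, zero_mul]
  · rw [W.p_eq_zero_of_not_covBy hy, mul_zero, zero_mul]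

lemma twoStepSum_of_const {x z : P} (hz : W.rk z = W.rk x + 2) {φ : P → ℝ} {c : ℝ}
    (hφ : ∀ y, x ⋖ y → φ y = c) : W.twoStepSum x φ z = W.chSum x z * c := by
  rw [twoStepSum, W.chSum_of_rk_eq_add_two hz, sum_mul]
  refine sum_congr rfl fun y _ => ?_
  by_cases hy : x ⋖ y
  · rw [hφ y hy]
  · simp [W.p_eq_zero_of_not_covBy hy]

lemma UpL_apply_of_rk_eq_add_two {x z : P} (hz : W.rk z = W.rk x + 2) (φ : P → ℝ) :
    W.UpL x φ z = W.twoStepSum x φ z / W.chSum x z := by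
  rw [twoStepSum, sum_div]
  change ∑ y, W.upMatL x z y * φ y = _
  refine sum_congr rfl fun y _ => ?_
  rw [upMatL, Matrix.of_apply]
  split_ifs with h
  · have hxy : x ⋖ y := W.covBy_iff_le_and_rk_eq.2 ⟨h.2, by have := W.rk_covBy y z h.1; lia⟩
    rw [pL, W.chSum_of_covBy hxy]
    ring
  · have : W.p z y * W.p y x = 0 := by
      by_contra hne
      exact h ⟨W.covBy_of_p_ne_zero (left_ne_zero_of_mul hne),
        (W.covBy_of_p_ne_zero (right_ne_zero_of_mul hne)).le⟩
    simp only [this, zero_mul, zero_div]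

lemma m_mul_MplusL {x y : P} (h : x ⋖ y) (φ : P → ℝ) :
    W.m y * W.MplusL x φ y
      = ∑ z, W.m z * W.p z y * (W.twoStepSum x φ z / W.chSum x z) := by
  change W.m y * ∑ z, W.downMatL x y z * W.UpL x φ z = _
  rw [mul_sum]
  refine sum_congr rfl fun z _ => ?_
  rw [downMatL, Matrix.of_apply]
  split_ifs with hz
  · have hrk : W.rk z = W.rk x + 2 := by
      have := W.rk_covBy x y h
      have := W.rk_covBy y z hz
      lia
    have := W.p_ne_zero h
    have := W.chSum_ne_zero_of_covBy_of_covBy h hz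
    have := (W.m_pos x).ne'
    have := (W.m_pos y).ne'
    rw [W.UpL_apply_of_rk_eq_add_two hrk, pL, mL, mL, W.chSum_of_covBy h]
    field_simp
  · simp [W.p_eq_zero_of_not_covBy hz]

lemma MplusL_sub (x : P) (φ ψ : P → ℝ) :
    W.MplusL x (φ - ψ) = W.MplusL x φ - W.MplusL x ψ := by
  simp only [MplusL, DownL, UpL, Matrix.mulVec_sub]

lemma MplusL_of_const {x y : P} (h : x ⋖ y) (hy : W.rk y < W.d) {φ : P → ℝ} {c : ℝ}
    (hφ : ∀ w, x ⋖ w → φ w = c) : W.MplusL x φ y = c := by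
  refine mul_left_cancel₀ (W.m_pos y).ne' ?_
  rw [W.m_mul_MplusL h, ← W.sum_m_mul_p hy, sum_mul]
  refine sum_congr rfl fun z _ => ?_
  by_cases hz : y ⋖ z
  · have := W.rk_covBy x y h
    have := W.rk_covBy y z hz
    rw [W.twoStepSum_of_const (by lia) hφ,
      mul_div_cancel_left₀ _ (W.chSum_ne_zero_of_covBy_of_covBy h hz)]
  · simp [W.p_eq_zero_of_not_covBy hz]

lemma m_mul_innerL_MplusL (x : P) (g φ : P → ℝ) :
    W.m x * W.innerL x 0 g (W.MplusL x φ)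
      = ∑ z, W.m z * (W.twoStepSum x g z * W.twoStepSum x φ z / W.chSum x z) := by
  calc W.m x * W.innerL x 0 g (W.MplusL x φ)
      = ∑ y, ∑ z, W.m z * (W.p z y * W.p y x * g y * W.twoStepSum x φ z / W.chSum x z) := by
        rw [m_mul_innerL]
        refine sum_congr rfl fun y _ => ?_
        by_cases hy : x ⋖ y
        · calc W.m y * W.p y x * g y * W.MplusL x φ y
              = W.p y x * g y * (W.m y * W.MplusL x φ y) := by ring
            _ = _ := by
              rw [W.m_mul_MplusL hy, mul_sum]
              exact sum_congr rfl fun z _ => by ring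
        · simp [W.p_eq_zero_of_not_covBy hy]
    _ = _ := by
        rw [sum_comm]
        refine sum_congr rfl fun z _ => ?_
        rw [← mul_sum, ← sum_div, ← sum_mul]
        rfl

lemma innerL_MplusL_sub_MminusL {x : P} (hx : W.rk x + 1 < W.d) (a : ℝ) (g : P → ℝ) :
    W.innerL x 0 g (fun y => W.MplusL x (fun w => g w - W.MminusL x g w) y
        - a * (g y - W.MminusL x g y))
      = W.innerL x 0 g (W.MplusL x g) - W.Down g x ^ 2
        - a * (W.innerL x 0 g g - W.Down g x ^ 2) := by
  have hlink : ∀ y, x ⋖ y → W.MplusL x (fun w => g w - W.MminusL x g w) y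
      - a * (g y - W.MminusL x g y)
        = W.MplusL x g y - a * g y - (1 - a) * W.Down g x * 1 := by
    intro y hy
    have hconst : W.MplusL x (W.MminusL x g) y = W.Down g x :=
      W.MplusL_of_const hy (by rwa [W.rk_covBy x y hy]) fun w hw => W.MminusL_apply hw g
    have hsub : W.MplusL x (fun w => g w - W.MminusL x g w) y = W.MplusL x g y - W.Down g x := by
      rw [← hconst]
      exact congrFun (W.MplusL_sub x g (W.MminusL x g)) y
    rw [hsub, W.MminusL_apply hy]
    ring
  have hlinear : ∀ φ : P → ℝ, ∀ b : ℝ, W.innerL x 0 g (fun y => φ y - a * g y - b * 1)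
      = W.innerL x 0 g φ - a * W.innerL x 0 g g - b * W.innerL x 0 g (fun _ => 1) := by
    intro φ b
    simp only [innerL, mul_sum, ← sum_sub_distrib]
    exact sum_congr rfl fun y _ => by ring
  rw [W.innerL_congr (fun _ _ => rfl) hlink, hlinear, innerL_one_right]
  ring

/-! ### Property UL -/

/-- The sum `∑ₓ m(x) ⟨gₓ, (M⁺ₓ - a)(1 - M⁻ₓ) gₓ⟩ₓ` over `x ∈ P(i - 1)`, for `g ∈ C^i`. -/
def localForm (a : ℝ) (i : ℤ) (g : P → ℝ) : ℝ :=
  ∑ x ∈ W.lvl (i - 1), W.m x *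
    W.innerL x 0 g (fun y => W.MplusL x (fun w => g w - W.MminusL x g w) y
      - a * (g y - W.MminusL x g y))

lemma localForm_eq (a : ℝ) {i : ℤ} (hi : 0 ≤ i) (hid : i < W.d) (g : P → ℝ) :
    W.localForm a i g
      = ∑ x ∈ W.lvl (i - 1), W.m x * W.innerL x 0 g (W.MplusL x g)
        - W.normSqAt (i - 1) (W.Down g)
        - a * (W.normSqAt i g - W.normSqAt (i - 1) (W.Down g)) := by
  rw [← W.sum_m_mul_innerL_self hi, normSqAt_eq_sum, ← sum_sub_distrib, ← sum_sub_distrib,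
    mul_sum, ← sum_sub_distrib]
  refine sum_congr rfl fun x hx => ?_
  rw [W.innerL_MplusL_sub_MminusL (by rw [W.mem_lvl.1 hx]; lia)]
  ring

section PropertyUL

variable {W} {cxyz cdia csqr : ℤ → ℝ} {i : ℤ}

lemma sum_p_mul_p_div_chSum (h1 : W.UL1 cxyz) (h2 : W.UL2 cdia) (hi : 0 ≤ i) (hid : i < W.d)
    {y y' z : P} (hz : W.rk z = i + 1) (hy : y ⋖ z) (hy' : y' ⋖ z) :
    ∑ x, W.p y x * W.p y' x / W.chSum x z = if y = y' then cxyz i else cdia i := by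
  have := W.rk_covBy y z hy
  have := W.rk_covBy y' z hy'
  split_ifs with heq
  · subst heq
    rw [← h1 i hi hid y (by lia) z hy, sum_filter_of_ne]
    · exact sum_congr rfl fun x _ => by rw [pow_two]
    · intro x _ hne
      refine W.covBy_of_p_ne_zero fun h => hne ?_
      simp [h]
  · rw [← h2 i hi hid y y' (by lia) (by lia) heq z hy hy', sum_filter_of_ne]
    refine fun x _ hne => ⟨W.covBy_of_p_ne_zero fun h => hne ?_,
      W.covBy_of_p_ne_zero fun h => hne ?_⟩ <;> simp [h]

lemma sum_twoStepSum_sq_div_chSum (h1 : W.UL1 cxyz) (h2 : W.UL2 cdia) (hi : 0 ≤ i)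
    (hid : i < W.d) {z : P} (hz : W.rk z = i + 1) (g : P → ℝ) :
    ∑ x, W.twoStepSum x g z * W.twoStepSum x g z / W.chSum x z
      = cdia i * W.Up g z ^ 2 + (cxyz i - cdia i) * ∑ y, W.p z y ^ 2 * g y ^ 2 := by
  have hexpand : ∀ x, W.twoStepSum x g z * W.twoStepSum x g z / W.chSum x z
      = ∑ y, ∑ y', W.p z y * g y * (W.p z y' * g y')
          * (W.p y x * W.p y' x / W.chSum x z) := by
    intro x
    rw [twoStepSum, sum_mul_sum, sum_div]
    refine sum_congr rfl fun y _ => ?_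
    rw [sum_div]
    exact sum_congr rfl fun y' _ => by ring
  have hpair : ∀ y y', W.p z y * g y * (W.p z y' * g y')
        * ∑ x, W.p y x * W.p y' x / W.chSum x z
      = cdia i * (W.p z y * g y * (W.p z y' * g y'))
        + if y = y' then (cxyz i - cdia i) * (W.p z y ^ 2 * g y ^ 2) else 0 := by
    intro y y'
    by_cases hy : y ⋖ z
    · by_cases hy' : y' ⋖ z
      · rw [sum_p_mul_p_div_chSum h1 h2 hi hid hz hy hy']
        split_ifs with heq
        · subst heq; ring
        · ring
      · by_cases heq : y = y'
        · exact absurd (heq ▸ hy) hy'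
        · simp [W.p_eq_zero_of_not_covBy hy', heq]
    · simp [W.p_eq_zero_of_not_covBy hy]
  calc ∑ x, W.twoStepSum x g z * W.twoStepSum x g z / W.chSum x z
      = ∑ y, ∑ y', W.p z y * g y * (W.p z y' * g y')
          * ∑ x, W.p y x * W.p y' x / W.chSum x z := by
        simp only [hexpand, mul_sum]
        rw [sum_comm]
        exact sum_congr rfl fun y _ => sum_comm
    _ = _ := by
        simp only [hpair, sum_add_distrib, sum_ite_eq, mem_univ, if_true, ← mul_sum]
        rw [Up_apply, pow_two, sum_mul]

lemma sum_m_mul_sum_p_sq (h3 : W.UL3 csqr) (hi : 0 ≤ i) (hid : i < W.d) (g : P → ℝ) :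
    ∑ z ∈ W.lvl (i + 1), W.m z * ∑ y, W.p z y ^ 2 * g y ^ 2 = csqr i * W.normSqAt i g := by
  calc ∑ z ∈ W.lvl (i + 1), W.m z * ∑ y, W.p z y ^ 2 * g y ^ 2
      = ∑ z ∈ W.lvl (i + 1), ∑ y, W.m z * W.p z y ^ 2 * g y ^ 2 :=
        sum_congr rfl fun z _ => by
          rw [mul_sum]
          exact sum_congr rfl fun y _ => by ring
    _ = ∑ y ∈ W.lvl i, ∑ z, W.m z * W.p z y ^ 2 * g y ^ 2 :=
        (W.sum_lvl_comm rfl fun y z h => by rw [W.p_eq_zero_of_rk_ne h]; ring).symm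
    _ = csqr i * W.normSqAt i g := by
        rw [normSqAt_eq_sum, mul_sum]
        refine sum_congr rfl fun y hy => ?_
        rw [← sum_mul, ← mul_assoc, ← h3 i hi hid y (W.mem_lvl.1 hy), sum_filter_of_ne]
        intro z _ hne
        refine W.covBy_of_p_ne_zero fun h => hne ?_
        simp [h]

lemma sum_m_mul_innerL_MplusL (h1 : W.UL1 cxyz) (h2 : W.UL2 cdia) (h3 : W.UL3 csqr)
    (hi : 0 ≤ i) (hid : i < W.d) (g : P → ℝ) :
    ∑ x ∈ W.lvl (i - 1), W.m x * W.innerL x 0 g (W.MplusL x g)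
      = cdia i * W.normSqAt (i + 1) (W.Up g)
        + (cxyz i - cdia i) * csqr i * W.normSqAt i g := by
  calc ∑ x ∈ W.lvl (i - 1), W.m x * W.innerL x 0 g (W.MplusL x g)
      = ∑ x ∈ W.lvl (i - 1), ∑ z,
          W.m z * (W.twoStepSum x g z * W.twoStepSum x g z / W.chSum x z) :=
        sum_congr rfl fun x _ => W.m_mul_innerL_MplusL x g g
    _ = ∑ z ∈ W.lvl (i + 1), ∑ x,
          W.m z * (W.twoStepSum x g z * W.twoStepSum x g z / W.chSum x z) :=
        W.sum_lvl_comm (n := 2) (by ring) fun x z h => by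
          simp [W.twoStepSum_eq_zero_of_rk_ne h]
    _ = ∑ z ∈ W.lvl (i + 1), (cdia i * (W.m z * W.Up g z ^ 2)
          + (cxyz i - cdia i) * (W.m z * ∑ y, W.p z y ^ 2 * g y ^ 2)) :=
        sum_congr rfl fun z hz => by
          rw [← mul_sum, sum_twoStepSum_sq_div_chSum h1 h2 hi hid (W.mem_lvl.1 hz)]
          ring
    _ = _ := by
        rw [sum_add_distrib, ← mul_sum, ← mul_sum, sum_m_mul_sum_p_sq h3 hi hid,
          ← normSqAt_eq_sum, mul_assoc]

lemma cxyz_sub_cdia_mul_csqr (h1 : W.UL1 cxyz) (h2 : W.UL2 cdia) (h3 : W.UL3 csqr)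
    (hi : 0 ≤ i) (hid : i < W.d) : (cxyz i - cdia i) * csqr i = 1 - cdia i := by
  have hone := sum_m_mul_innerL_MplusL h1 h2 h3 hi hid (fun _ => 1)
  have hlocal : ∑ x ∈ W.lvl (i - 1), W.m x * W.innerL x 0 (fun _ => 1) (W.MplusL x fun _ => 1)
      = W.normSqAt i (fun _ => 1) := by
    rw [← W.sum_m_mul_innerL_self hi]
    refine sum_congr rfl fun x hx => congrArg (W.m x * ·) ?_
    refine W.innerL_congr (fun _ _ => rfl) fun y hy => W.MplusL_of_const hy ?_ fun _ _ => rfl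
    rw [W.rk_covBy x y hy, W.mem_lvl.1 hx]
    lia
  have hUp : W.normSqAt (i + 1) (W.Up fun _ => 1) = W.normSqAt (i + 1) (fun _ => 1) :=
    W.innerAt_congr (fun x hx => W.Up_one (by lia)) fun x hx => W.Up_one (by lia)
  rw [hlocal, hUp, W.normSqAt_one (by lia) (by lia), W.normSqAt_one (by lia) (by lia)] at hone
  linarith

lemma normSqAt_sub_normSqAt_Up (h1 : W.UL1 cxyz) (h2 : W.UL2 cdia) (h3 : W.UL3 csqr)
    (hi : 0 ≤ i) (hid : i < W.d) (hdia : cdia i ≠ 0) (a : ℝ) (g : P → ℝ) :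
    W.normSqAt i g - W.normSqAt (i + 1) (W.Up g)
      = (1 - a) / cdia i * (W.normSqAt i g - W.normSqAt (i - 1) (W.Down g))
        - 1 / cdia i * W.localForm a i g := by
  rw [W.localForm_eq a hi hid, sum_m_mul_innerL_MplusL h1 h2 h3 hi hid,
    cxyz_sub_cdia_mul_csqr h1 h2 h3 hi hid]
  field_simp
  ring

end PropertyUL

/-! ### The decomposition -/

/-- The nonnegative multiple of `g ∈ C^i` with squared norm `t`. If `‖g‖ = 0`, it is `0`. -/
def rescale (i : ℤ) (t : ℝ) (g : P → ℝ) : P → ℝ := √(t / W.normSqAt i g) • g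

lemma innerAt_rescale_one {i : ℤ} {g : P → ℝ} (hg : W.innerAt i g (fun _ => 1) = 0) (t : ℝ) :
    W.innerAt i (W.rescale i t g) (fun _ => 1) = 0 := by
  rw [rescale, innerAt_smul_left, hg, mul_zero]

lemma normSqAt_rescale {i : ℤ} {t : ℝ} {g : P → ℝ} (ht : 0 ≤ t)
    (hg : W.normSqAt i g = 0 → t = 0) : W.normSqAt i (W.rescale i t g) = t := by
  rw [rescale, normSqAt_smul, Real.sq_sqrt (div_nonneg ht (W.normSqAt_nonneg i g))]
  exact div_mul_cancel_of_imp hg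

/-- The nonnegative multiple `g'` of `D g`, for `g ∈ C^{i+1}`, with `‖U g'‖ = ‖D g‖`.
If `‖U D g‖ = 0`, then `‖D g‖ = 0` as well and the multiple is `0`. -/
def normalizedDown (i : ℤ) (g : P → ℝ) : P → ℝ :=
  √(W.normSqAt i (W.Down g) / W.normSqAt (i + 1) (W.Up (W.Down g))) • W.Down g

lemma normSqAt_Down_sq_le (i : ℤ) (g : P → ℝ) :
    W.normSqAt i (W.Down g) ^ 2
      ≤ W.normSqAt (i + 1) g * W.normSqAt (i + 1) (W.Up (W.Down g)) := by
  rw [normSqAt, innerAt_Down]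
  exact W.innerAt_sq_le (i + 1) g _

lemma innerAt_normalizedDown_one {i : ℤ} (hi : -1 ≤ i) {g : P → ℝ}
    (hg : W.innerAt (i + 1) g (fun _ => 1) = 0) :
    W.innerAt i (W.normalizedDown i g) (fun _ => 1) = 0 := by
  rw [normalizedDown, innerAt_smul_left, W.innerAt_Down_one hi, hg, mul_zero]

lemma normSqAt_Up_normalizedDown (i : ℤ) (g : P → ℝ) :
    W.normSqAt (i + 1) (W.Up (W.normalizedDown i g)) = W.normSqAt i (W.Down g) := by
  have hUp (c : ℝ) (φ : P → ℝ) : W.Up (c • φ) = c • W.Up φ := Matrix.mulVec_smul _ c φ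
  rw [normalizedDown, hUp, normSqAt_smul,
    Real.sq_sqrt (div_nonneg (W.normSqAt_nonneg _ _) (W.normSqAt_nonneg _ _))]
  refine div_mul_cancel_of_imp fun h => ?_
  have := W.normSqAt_Down_sq_le i g
  rw [h, mul_zero] at this
  exact pow_eq_zero_iff two_ne_zero |>.1 (this.antisymm (sq_nonneg _))

lemma normSqAt_normalizedDown_le (i : ℤ) (g : P → ℝ) :
    W.normSqAt i (W.normalizedDown i g) ≤ W.normSqAt (i + 1) g := by
  rw [normalizedDown, normSqAt_smul,
    Real.sq_sqrt (div_nonneg (W.normSqAt_nonneg _ _) (W.normSqAt_nonneg _ _)),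
    div_mul_eq_mul_div, ← pow_two]
  exact div_le_of_le_mul₀ (W.normSqAt_nonneg _ _) (W.normSqAt_nonneg _ _)
    (W.normSqAt_Down_sq_le i g)

/-- The functions `g_j ∈ C^j` of the decomposition of `f ∈ C^k`: `g_k = f`, and `g_j` is the
normalized down image of `g_{j+1}` for `j < k`. Only the indices `-1 ≤ j ≤ k` are meaningful. -/
def downSeq (k : ℤ) (f : P → ℝ) (j : ℤ) : P → ℝ :=
  if k ≤ j then f else W.normalizedDown j (downSeq k f (j + 1))
termination_by (k - j).toNat

/-- The functions `h_j ∈ C^j` of the decomposition of `f ∈ C^k`, with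
`‖h_j‖² = ‖g_j‖² - ‖g_{j-1}‖²`. -/
def increment (k : ℤ) (f : P → ℝ) (j : ℤ) : P → ℝ :=
  W.rescale j (W.normSqAt j (W.downSeq k f j) - W.normSqAt (j - 1) (W.downSeq k f (j - 1)))
    (W.downSeq k f j)

lemma downSeq_self (k : ℤ) (f : P → ℝ) : W.downSeq k f k = f := by
  rw [downSeq, if_pos le_rfl]

lemma downSeq_of_lt {j k : ℤ} (h : j < k) (f : P → ℝ) :
    W.downSeq k f j = W.normalizedDown j (W.downSeq k f (j + 1)) := by
  rw [downSeq, if_neg h.not_ge]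

lemma normSqAt_Up_downSeq_of_lt {j k : ℤ} (h : j < k) (f : P → ℝ) :
    W.normSqAt (j + 1) (W.Up (W.downSeq k f j))
      = W.normSqAt j (W.Down (W.downSeq k f (j + 1))) := by
  rw [W.downSeq_of_lt h, normSqAt_Up_normalizedDown]

section Decomposition

variable {W} {j k : ℤ} {f : P → ℝ}

lemma innerAt_downSeq_one (hf : W.innerAt k f (fun _ => 1) = 0) (hj : -1 ≤ j) (hjk : j ≤ k) :
    W.innerAt j (W.downSeq k f j) (fun _ => 1) = 0 := by
  induction j, hjk using Int.leInductionDown with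
  | base => rwa [downSeq_self]
  | pred j hjk ih =>
    rw [W.downSeq_of_lt (by lia)]
    refine W.innerAt_normalizedDown_one hj ?_
    rw [sub_add_cancel]
    exact ih (by lia)

lemma innerAt_increment_one (hf : W.innerAt k f (fun _ => 1) = 0) (hj : -1 ≤ j) (hjk : j ≤ k) :
    W.innerAt j (W.increment k f j) (fun _ => 1) = 0 :=
  W.innerAt_rescale_one (innerAt_downSeq_one hf hj hjk) _

lemma normSqAt_increment (hjk : j ≤ k) :
    W.normSqAt j (W.increment k f j)
      = W.normSqAt j (W.downSeq k f j) - W.normSqAt (j - 1) (W.downSeq k f (j - 1)) := by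
  have hmono : W.normSqAt (j - 1) (W.downSeq k f (j - 1)) ≤ W.normSqAt j (W.downSeq k f j) := by
    have := W.normSqAt_normalizedDown_le (j - 1) (W.downSeq k f (j - 1 + 1))
    rwa [← W.downSeq_of_lt (by lia), sub_add_cancel] at this
  have := W.normSqAt_nonneg (j - 1) (W.downSeq k f (j - 1))
  exact W.normSqAt_rescale (sub_nonneg.2 hmono) fun h => by linarith

lemma normSqAt_downSeq_neg_one (hf : W.innerAt k f (fun _ => 1) = 0) (hk : -1 ≤ k) :
    W.normSqAt (-1) (W.downSeq k f (-1)) = 0 :=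
  W.normSqAt_neg_one_eq_zero (innerAt_downSeq_one hf le_rfl hk)

lemma normSqAt_Up_downSeq_neg_one (hf : W.innerAt k f (fun _ => 1) = 0) (hk : 0 ≤ k) :
    W.normSqAt (-1 + 1) (W.Up (W.downSeq k f (-1))) = 0 := by
  rw [W.normSqAt_Up_downSeq_of_lt (by lia)]
  refine W.normSqAt_neg_one_eq_zero ?_
  rw [W.innerAt_Down_one le_rfl]
  exact innerAt_downSeq_one hf (by lia) (by lia)

lemma normSqAt_downSeq (hf : W.innerAt k f (fun _ => 1) = 0) (hj : -1 ≤ j) (hjk : j ≤ k) :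
    W.normSqAt j (W.downSeq k f j) = ∑ i ∈ Icc 0 j, W.normSqAt i (W.increment k f i) := by
  rw [sum_congr rfl fun i hi => normSqAt_increment ((mem_Icc.1 hi).2.trans hjk),
    sum_Icc_int_sub_sub_one (fun i => W.normSqAt i (W.downSeq k f i)) hj,
    normSqAt_downSeq_neg_one hf (hj.trans hjk), sub_zero]

lemma normSqAt_sub_normSqAt_Up_downSeq {cxyz cdia csqr : ℤ → ℝ} (h1 : W.UL1 cxyz)
    (h2 : W.UL2 cdia) (h3 : W.UL3 csqr) (hk : 0 ≤ k) (hkd : k < W.d)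
    (hdia : ∀ i, 0 ≤ i → i ≤ k → cdia i ≠ 0) (α : ℤ → ℝ)
    (hf : W.innerAt k f (fun _ => 1) = 0) (hj : -1 ≤ j) (hjk : j ≤ k) :
    W.normSqAt j (W.downSeq k f j) - W.normSqAt (j + 1) (W.Up (W.downSeq k f j))
      = ∑ i ∈ Icc 0 j, (∏ t ∈ Icc i j, (1 - α t) / cdia t) * W.normSqAt i (W.increment k f i)
        - ∑ i ∈ Icc 0 j, (∏ t ∈ Icc (i + 1) j, (1 - α t) / cdia t)
            * (1 / cdia i * W.localForm (α i) i (W.downSeq k f i)) := by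
  refine eq_sum_prod_mul_sub_of_recurrence
    (e := fun j => W.normSqAt j (W.downSeq k f j) - W.normSqAt (j + 1) (W.Up (W.downSeq k f j)))
    (t := fun i => 1 / cdia i * W.localForm (α i) i (W.downSeq k f i)) ?_ ?_ hj hjk
  · rw [normSqAt_downSeq_neg_one hf (by lia), normSqAt_Up_downSeq_neg_one hf hk, sub_zero]
  · intro j hj hjk
    rw [normSqAt_sub_normSqAt_Up h1 h2 h3 (by lia) (by lia) (hdia _ (by lia) (by lia)) (α (j + 1)),
      normSqAt_increment (by lia), add_sub_cancel_right, W.normSqAt_Up_downSeq_of_lt hjk]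
    ring

lemma normSqAt_Up_downSeq {cxyz cdia csqr : ℤ → ℝ} (h1 : W.UL1 cxyz)
    (h2 : W.UL2 cdia) (h3 : W.UL3 csqr) (hk : 0 ≤ k) (hkd : k < W.d)
    (hdia : ∀ i, 0 ≤ i → i ≤ k → cdia i ≠ 0) (α : ℤ → ℝ)
    (hf : W.innerAt k f (fun _ => 1) = 0) (hj : -1 ≤ j) (hjk : j ≤ k) :
    W.normSqAt (j + 1) (W.Up (W.downSeq k f j))
      = ∑ i ∈ Icc 0 j, (1 - ∏ t ∈ Icc i j, (1 - α t) / cdia t)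
            * W.normSqAt i (W.increment k f i)
        + ∑ i ∈ Icc 0 j, (1 / cdia i * ∏ t ∈ Icc (i + 1) j, (1 - α t) / cdia t)
            * W.localForm (α i) i (W.downSeq k f i) := by
  have hdefect := normSqAt_sub_normSqAt_Up_downSeq h1 h2 h3 hk hkd hdia α hf hj hjk
  rw [normSqAt_downSeq hf hj hjk, sub_eq_iff_eq_add, ← sub_eq_iff_eq_add'] at hdefect
  rw [← hdefect, ← sub_add, ← sum_sub_distrib]
  congr 1 <;> exact sum_congr rfl fun i _ => by ring

end Decomposition

end WGP

/-- the decomposition of functions orthogonal to constants under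
Property UL. -/
theorem stmt8 {P : Type} [Fintype P] [PartialOrder P] (W : WGP P)
    (cxyz cdia csqr : ℤ → ℝ)
    (h1 : W.UL1 cxyz) (h2 : W.UL2 cdia) (h3 : W.UL3 csqr)
    (hdia : ∀ j : ℤ, 0 ≤ j → j ≤ W.d - 1 → 0 < cdia j)
    (α : ℤ → ℝ)
    (k : ℤ) (hk0 : 0 ≤ k) (hkd : k ≤ W.d - 1)
    (f : P → ℝ) (hf : W.innerAt k f (fun _ => 1) = 0) :
    ∃ g h : ℤ → P → ℝ,
      (∀ j : ℤ, 0 ≤ j → j ≤ k →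
        W.innerAt j (g j) (fun _ => 1) = 0 ∧ W.innerAt j (h j) (fun _ => 1) = 0) ∧
      (∀ x : P, W.rk x = k → g k x = f x) ∧
      (∀ j : ℤ, 0 ≤ j → j ≤ k →
        W.normSqAt j (g j) = ∑ i ∈ Finset.Icc 0 j, W.normSqAt i (h i)) ∧
      (∀ j : ℤ, 0 ≤ j → j ≤ k →
        W.normSqAt (j + 1) (W.Up (g j))
          = ∑ i ∈ Finset.Icc 0 j,
              (1 - ∏ t ∈ Finset.Icc i j, (1 - α t) / cdia t) * W.normSqAt i (h i)
            + ∑ i ∈ Finset.Icc 0 j,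
                ((1 / cdia i) * ∏ t ∈ Finset.Icc (i + 1) j, (1 - α t) / cdia t) *
                  ∑ x ∈ W.lvl (i - 1), W.m x *
                    W.innerL x 0 (g i)
                      (fun y => W.MplusL x (fun w => g i w - W.MminusL x (g i) w) y
                        - α i * (g i y - W.MminusL x (g i) y))) := by
  refine ⟨W.downSeq k f, W.increment k f, fun j hj hjk => ?_, fun x _ => ?_, fun j hj hjk => ?_,
    fun j hj hjk => ?_⟩
  · exact ⟨WGP.innerAt_downSeq_one hf (by lia) hjk, WGP.innerAt_increment_one hf (by lia) hjk⟩
  · rw [W.downSeq_self]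
  · exact WGP.normSqAt_downSeq hf (by lia) hjk
  · exact WGP.normSqAt_Up_downSeq h1 h2 h3 hk0 (by lia)
      (fun i hi hik => (hdia i hi (hik.trans hkd)).ne') α hf (by lia) hjk
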